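/- arXiv:2411.13442 — 3 statements merged into one kernel-verified Lean document; each statement's English description precedes it below -/
import Mathlib

section
/- Fix p > 1 and y > 0, and let g : ℝ → ℝ satisfy g(q) ∈ (0,1) and ∫_0^{g(q)} (1-t^q)^{-1/p} dt = y for every q > 1. Then g is concave on the interval (1,∞). In other words, for each fixed y and p > 1 the function q ↦ sin_{p,q}(y) is concave on (1,∞). -/
open MeasureTheory

open Set

/-!
Write `h x q = (1 - x ^ q) ^ a` with `a = 1 / p`. For `q₀ < q₁` and `q = α q₀ + β q₁`, the sines
`x₀, x₁` at `q₀, q₁` solve `x' = h x qᵢ`, so `α x₀ + β x₁` stays below the sine at `q` as soon as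
`h` satisfies the concavity inequality on the segment from `(x₀, q₀)` to `(x₁, q₁)`.

As `t ↦ t ^ a` is concave and increasing, that inequality follows from convexity of `r ↦ X ^ r`
along the segment `X = m r + c`. With `w = m / X`, the second derivative is
`X ^ r * ((log X + r w) ^ 2 + w (2 - r w))`, which for `r ≥ 1` is nonnegative if `X ≥ e⁻¹` or
`r m ≤ 2 X`. Now `q ↦ q * arcsin_{p,q} x` is increasing by Bernoulli's inequality, and
this bounds the slope: `q₁ m ≤ arcsin_{p,q₀} x₀ ≤ x₀ / (1 - x₀)`, which is at most `2 x₀ ≤ 2 X`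
when `X < e⁻¹ < 1 / 2`.
-/

/-- The generalized inverse sine `arcsin_{p,q}` on `[0, 1)`, where `a = 1 / p`. Using `a` as the
parameter makes the range of exponents `[0, 1]`, with `a = 0` standing for `p = ∞`. -/
noncomputable def arcsinPQ (a q x : ℝ) : ℝ :=
  ∫ t in (0 : ℝ)..x, (1 - t ^ q) ^ (-a)

/-- The generalized sine `sin_{p,q}`, where `a = 1 / p`, as the inverse of `arcsinPQ a q` on
`[0, 1)`; it is meaningful only on `arcsinPQ a q '' Ico 0 1`. -/
noncomputable def sinPQ (a q : ℝ) : ℝ → ℝ :=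
  Function.invFunOn (arcsinPQ a q) (Ico 0 1)

section Arcsin

variable {a q x x' : ℝ}

lemma one_sub_rpow_mem_Ioc (hq : 0 < q) (hx : x ∈ Ico (0 : ℝ) 1) : 1 - x ^ q ∈ Ioc (0 : ℝ) 1 :=
  ⟨sub_pos.2 (Real.rpow_lt_one hx.1 hx.2 hq), sub_le_self _ (Real.rpow_nonneg hx.1 q)⟩

lemma one_le_one_sub_rpow_rpow_neg (ha : 0 ≤ a) (hq : 0 < q) (hx : x ∈ Ico (0 : ℝ) 1) :
    1 ≤ (1 - x ^ q) ^ (-a) :=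
  Real.one_le_rpow_of_pos_of_le_one_of_nonpos (one_sub_rpow_mem_Ioc hq hx).1
    (one_sub_rpow_mem_Ioc hq hx).2 (neg_nonpos.2 ha)

lemma continuousOn_one_sub_rpow_rpow (hq : 0 < q) :
    ContinuousOn (fun t : ℝ ↦ (1 - t ^ q) ^ (-a)) (Ico 0 1) :=
  (continuousOn_const.sub (Real.continuous_rpow_const hq.le).continuousOn).rpow_const
    fun _ ht ↦ Or.inl (one_sub_rpow_mem_Ioc hq ht).1.ne'

lemma intervalIntegrable_one_sub_rpow_rpow (hq : 0 < q) (hx : x ∈ Ico (0 : ℝ) 1)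
    (hx' : x' ∈ Ico (0 : ℝ) 1) :
    IntervalIntegrable (fun t : ℝ ↦ (1 - t ^ q) ^ (-a)) volume x x' :=
  ((continuousOn_one_sub_rpow_rpow hq).mono
    (ordConnected_Ico.uIcc_subset hx hx')).intervalIntegrable

lemma arcsinPQ_zero : arcsinPQ a q 0 = 0 :=
  intervalIntegral.integral_same

lemma hasDerivAt_arcsinPQ (hq : 0 < q) (hx : x ∈ Ioo (0 : ℝ) 1) :
    HasDerivAt (arcsinPQ a q) ((1 - x ^ q) ^ (-a)) x := by
  have hcont : ContinuousOn (fun t : ℝ ↦ (1 - t ^ q) ^ (-a)) (Ioo 0 1) :=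
    (continuousOn_one_sub_rpow_rpow hq).mono Ioo_subset_Ico_self
  exact intervalIntegral.integral_hasDerivAt_right
    (intervalIntegrable_one_sub_rpow_rpow hq ⟨le_rfl, one_pos⟩ (Ioo_subset_Ico_self hx))
    (hcont.stronglyMeasurableAtFilter isOpen_Ioo x hx)
    (hcont.continuousAt (isOpen_Ioo.mem_nhds hx))

lemma continuousOn_arcsinPQ (hq : 0 < q) : ContinuousOn (arcsinPQ a q) (Ico 0 1) := by
  intro x hx
  obtain ⟨b, hxb, hb1⟩ := exists_between hx.2
  have hb0 : 0 ≤ b := hx.1.trans hxb.le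
  have hcont : ContinuousOn (arcsinPQ a q) (uIcc 0 b) :=
    intervalIntegral.continuousOn_primitive_interval <| (intervalIntegrable_iff' (by simp)).1 <|
      intervalIntegrable_one_sub_rpow_rpow hq ⟨le_rfl, one_pos⟩ ⟨hb0, hb1⟩
  rw [uIcc_of_le hb0] at hcont
  refine (hcont x ⟨hx.1, hxb.le⟩).mono_of_mem_nhdsWithin ?_
  filter_upwards [self_mem_nhdsWithin, mem_nhdsWithin_of_mem_nhds (Iio_mem_nhds hxb)]
    with t ht htb using ⟨ht.1, htb.le⟩

lemma sub_le_arcsinPQ_sub (ha : 0 ≤ a) (hq : 0 < q) (hx : 0 ≤ x) (hxx' : x ≤ x') (hx' : x' < 1) :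
    x' - x ≤ arcsinPQ a q x' - arcsinPQ a q x := by
  have hx_mem : x ∈ Ico (0 : ℝ) 1 := ⟨hx, hxx'.trans_lt hx'⟩
  have hx'_mem : x' ∈ Ico (0 : ℝ) 1 := ⟨hx.trans hxx', hx'⟩
  have h0_mem : (0 : ℝ) ∈ Ico (0 : ℝ) 1 := ⟨le_rfl, one_pos⟩
  calc x' - x = ∫ _ in x..x', (1 : ℝ) := by simp
    _ ≤ ∫ t in x..x', (1 - t ^ q) ^ (-a) :=
      intervalIntegral.integral_mono_on hxx' intervalIntegrable_const
        (intervalIntegrable_one_sub_rpow_rpow hq hx_mem hx'_mem) fun t ht ↦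
          one_le_one_sub_rpow_rpow_neg ha hq ⟨hx.trans ht.1, ht.2.trans_lt hx'⟩
    _ = arcsinPQ a q x' - arcsinPQ a q x :=
      (intervalIntegral.integral_interval_sub_left
        (intervalIntegrable_one_sub_rpow_rpow hq h0_mem hx'_mem)
        (intervalIntegrable_one_sub_rpow_rpow hq h0_mem hx_mem)).symm

lemma strictMonoOn_arcsinPQ (ha : 0 ≤ a) (hq : 0 < q) :
    StrictMonoOn (arcsinPQ a q) (Ico 0 1) := fun x hx x' hx' hlt ↦ by
  linarith [sub_le_arcsinPQ_sub ha hq hx.1 hlt.le hx'.2]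

lemma arcsinPQ_le_div_one_sub (ha : a ≤ 1) (hq : 1 ≤ q) (hx : x ∈ Ico (0 : ℝ) 1) :
    arcsinPQ a q x ≤ x / (1 - x) := by
  have hq0 : 0 < q := one_pos.trans_le hq
  have h_le : ∀ t ∈ Icc 0 x, (1 - t ^ q) ^ (-a) ≤ (1 - x)⁻¹ := fun t ht ↦ by
    have ht_mem : t ∈ Ico (0 : ℝ) 1 := ⟨ht.1, ht.2.trans_lt hx.2⟩
    have htx : 1 - x ≤ 1 - t ^ q := sub_le_sub_left
      ((Real.rpow_le_self_of_le_one ht.1 ht_mem.2.le hq).trans ht.2) 1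
    obtain ⟨hpos, hle⟩ := one_sub_rpow_mem_Ioc hq0 ht_mem
    calc (1 - t ^ q) ^ (-a) ≤ (1 - t ^ q) ^ (-1 : ℝ) :=
          Real.rpow_le_rpow_of_exponent_ge hpos hle (neg_le_neg ha)
      _ = (1 - t ^ q)⁻¹ := Real.rpow_neg_one _
      _ ≤ (1 - x)⁻¹ := inv_anti₀ (sub_pos.2 hx.2) htx
  calc arcsinPQ a q x ≤ ∫ _ in (0 : ℝ)..x, (1 - x)⁻¹ :=
        intervalIntegral.integral_mono_on hx.1
          (intervalIntegrable_one_sub_rpow_rpow hq0 ⟨le_rfl, one_pos⟩ hx)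
          intervalIntegrable_const h_le
    _ = x / (1 - x) := by simp [div_eq_mul_inv]

end Arcsin

section Monotonicity

variable {a q₀ q₁ t x : ℝ}

lemma mul_one_sub_rpow_le (hq₀ : 0 < q₀) (hq : q₀ ≤ q₁) (ht : 0 ≤ t) :
    q₀ * (1 - t ^ q₁) ≤ q₁ * (1 - t ^ q₀) := by
  have h := one_add_mul_self_le_rpow_one_add (s := t ^ q₀ - 1)
    (by linarith [Real.rpow_nonneg ht q₀]) ((one_le_div hq₀).2 hq)
  rw [add_sub_cancel, ← Real.rpow_mul ht, mul_div_cancel₀ _ hq₀.ne'] at h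
  have h' := mul_le_mul_of_nonneg_left h hq₀.le
  rw [mul_add, ← mul_assoc, mul_div_cancel₀ _ hq₀.ne'] at h'
  linarith

lemma mul_one_sub_rpow_rpow_neg_le (ha0 : 0 ≤ a) (ha1 : a ≤ 1) (hq₀ : 0 < q₀) (hq : q₀ ≤ q₁)
    (ht : t ∈ Ico (0 : ℝ) 1) :
    q₀ * (1 - t ^ q₀) ^ (-a) ≤ q₁ * (1 - t ^ q₁) ^ (-a) := by
  have hq₁ : 0 < q₁ := hq₀.trans_le hq
  have hA : 0 < 1 - t ^ q₀ := (one_sub_rpow_mem_Ioc hq₀ ht).1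
  have hB : 0 < 1 - t ^ q₁ := (one_sub_rpow_mem_Ioc hq₁ ht).1
  have hc : 0 < q₀ / q₁ := div_pos hq₀ hq₁
  have hBA : q₀ / q₁ * (1 - t ^ q₁) ≤ 1 - t ^ q₀ := by
    rw [div_mul_eq_mul_div, div_le_iff₀' hq₁]
    exact mul_one_sub_rpow_le hq₀ hq ht.1
  have key : q₀ / q₁ * (1 - t ^ q₁) ^ a ≤ (1 - t ^ q₀) ^ a :=
    calc q₀ / q₁ * (1 - t ^ q₁) ^ a ≤ (q₀ / q₁) ^ a * (1 - t ^ q₁) ^ a := by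
          gcongr
          exact Real.self_le_rpow_of_le_one hc.le ((div_le_one hq₁).2 hq) ha1
      _ = (q₀ / q₁ * (1 - t ^ q₁)) ^ a := (Real.mul_rpow hc.le hB.le).symm
      _ ≤ (1 - t ^ q₀) ^ a := by gcongr
  rw [div_mul_eq_mul_div, div_le_iff₀' hq₁] at key
  rw [Real.rpow_neg hA.le, Real.rpow_neg hB.le, ← div_eq_mul_inv, ← div_eq_mul_inv,
    div_le_div_iff₀ (by positivity) (by positivity)]
  exact key

lemma mul_arcsinPQ_le_mul_arcsinPQ (ha0 : 0 ≤ a) (ha1 : a ≤ 1) (hq₀ : 0 < q₀) (hq : q₀ ≤ q₁)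
    (hx : x ∈ Ico (0 : ℝ) 1) : q₀ * arcsinPQ a q₀ x ≤ q₁ * arcsinPQ a q₁ x := by
  have h0 : (0 : ℝ) ∈ Ico (0 : ℝ) 1 := ⟨le_rfl, one_pos⟩
  rw [arcsinPQ, arcsinPQ, ← intervalIntegral.integral_const_mul,
    ← intervalIntegral.integral_const_mul]
  exact intervalIntegral.integral_mono_on hx.1
    ((intervalIntegrable_one_sub_rpow_rpow hq₀ h0 hx).const_mul _)
    ((intervalIntegrable_one_sub_rpow_rpow (hq₀.trans_le hq) h0 hx).const_mul _)
    fun t ht ↦ mul_one_sub_rpow_rpow_neg_le ha0 ha1 hq₀ hq ⟨ht.1, ht.2.trans_lt hx.2⟩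

lemma arcsinPQ_le_arcsinPQ (ha : 0 ≤ a) (hq₀ : 0 < q₀) (hq : q₀ ≤ q₁) (hx : x ∈ Ico (0 : ℝ) 1) :
    arcsinPQ a q₁ x ≤ arcsinPQ a q₀ x := by
  have h0 : (0 : ℝ) ∈ Ico (0 : ℝ) 1 := ⟨le_rfl, one_pos⟩
  refine intervalIntegral.integral_mono_on hx.1
    (intervalIntegrable_one_sub_rpow_rpow (hq₀.trans_le hq) h0 hx)
    (intervalIntegrable_one_sub_rpow_rpow hq₀ h0 hx) fun t ht ↦ ?_
  have ht_mem : t ∈ Ico (0 : ℝ) 1 := ⟨ht.1, ht.2.trans_lt hx.2⟩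
  exact Real.rpow_le_rpow_of_nonpos (one_sub_rpow_mem_Ioc hq₀ ht_mem).1
    (sub_le_sub_left (Real.rpow_le_rpow_of_exponent_ge_of_imp ht.1 ht_mem.2.le hq
      fun _ h ↦ absurd h (hq₀.trans_le hq).ne') 1) (neg_nonpos.2 ha)

end Monotonicity

section LevelSet

variable {a q₀ q₁ x₀ x₁ : ℝ}

lemma le_of_arcsinPQ_eq (ha : 0 ≤ a) (hq₀ : 0 < q₀) (hq : q₀ ≤ q₁) (hx₀ : x₀ ∈ Ico (0 : ℝ) 1)
    (hx₁ : x₁ ∈ Ico (0 : ℝ) 1) (h : arcsinPQ a q₀ x₀ = arcsinPQ a q₁ x₁) : x₀ ≤ x₁ :=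
  ((strictMonoOn_arcsinPQ ha (hq₀.trans_le hq)).le_iff_le hx₀ hx₁).1 <|
    (arcsinPQ_le_arcsinPQ ha hq₀ hq hx₀).trans_eq h

lemma mul_sub_le_of_arcsinPQ_eq (ha0 : 0 ≤ a) (ha1 : a ≤ 1) (hq₀ : 0 < q₀) (hq : q₀ ≤ q₁)
    (hx₀ : x₀ ∈ Ico (0 : ℝ) 1) (hx₁ : x₁ ∈ Ico (0 : ℝ) 1)
    (h : arcsinPQ a q₀ x₀ = arcsinPQ a q₁ x₁) :
    q₁ * (x₁ - x₀) ≤ (q₁ - q₀) * arcsinPQ a q₀ x₀ := by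
  have hq₁ : 0 < q₁ := hq₀.trans_le hq
  have hx : x₀ ≤ x₁ := le_of_arcsinPQ_eq ha0 hq₀ hq hx₀ hx₁ h
  calc q₁ * (x₁ - x₀) ≤ q₁ * (arcsinPQ a q₁ x₁ - arcsinPQ a q₁ x₀) := by
        gcongr q₁ * ?_
        exact sub_le_arcsinPQ_sub ha0 hq₁ hx₀.1 hx hx₁.2
    _ = q₁ * arcsinPQ a q₀ x₀ - q₁ * arcsinPQ a q₁ x₀ := by rw [h, mul_sub]
    _ ≤ q₁ * arcsinPQ a q₀ x₀ - q₀ * arcsinPQ a q₀ x₀ := by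
        gcongr ?_ - ?_
        exact mul_arcsinPQ_le_mul_arcsinPQ ha0 ha1 hq₀ hq hx₀
    _ = (q₁ - q₀) * arcsinPQ a q₀ x₀ := (sub_mul _ _ _).symm

end LevelSet

section Convexity

lemma sq_sub_add_mul_two_sub_nonneg {r l w : ℝ} (hr : 1 ≤ r) (hw : 0 ≤ w)
    (h : l ≤ 1 ∨ r * w ≤ 2) : 0 ≤ (l - r * w) ^ 2 + w * (2 - r * w) := by
  rcases h with hl | hrw
  · have hr0 : 0 < r := one_pos.trans_le hr
    refine nonneg_of_mul_nonneg_right ?_ hr0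
    calc 0 ≤ (r - 1) * (r * w - l) ^ 2 + 2 * (r * w) * (1 - l) + l ^ 2 := by
          have := sub_nonneg.2 hr
          have := sub_nonneg.2 hl
          positivity
      _ = r * ((l - r * w) ^ 2 + w * (2 - r * w)) := by ring
  · have := sub_nonneg.2 hrw
    positivity

variable {m c r : ℝ}

lemma hasDerivAt_affine_rpow_self (hX : 0 < m * r + c) :
    HasDerivAt (fun r : ℝ ↦ (m * r + c) ^ r)
      ((m * r + c) ^ r * (Real.log (m * r + c) + r * (m / (m * r + c)))) r := by
  have hlin : HasDerivAt (fun r : ℝ ↦ m * r + c) m r := by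
    simpa using ((hasDerivAt_id r).const_mul m).add_const c
  convert! hlin.rpow (hasDerivAt_id r) hX using 1
  rw [id, Real.rpow_sub_one hX.ne']
  ring

lemma hasDerivAt_deriv_affine_rpow_self (hX : 0 < m * r + c) :
    HasDerivAt (fun r : ℝ ↦ (m * r + c) ^ r * (Real.log (m * r + c) + r * (m / (m * r + c))))
      ((m * r + c) ^ r * ((-Real.log (m * r + c) - r * (m / (m * r + c))) ^ 2
        + m / (m * r + c) * (2 - r * (m / (m * r + c))))) r := by
  have hlin : HasDerivAt (fun r : ℝ ↦ m * r + c) m r := by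
    simpa using ((hasDerivAt_id r).const_mul m).add_const c
  convert! (hasDerivAt_affine_rpow_self hX).mul ((hlin.log hX.ne').add
    ((hasDerivAt_id r).mul ((hasDerivAt_const r m).div hlin hX.ne'))) using 1
  simp only [Pi.add_apply, Pi.mul_apply, Pi.div_apply, id]
  field_simp
  ring

lemma convexOn_affine_rpow_self {s : Set ℝ} (hs : Convex ℝ s) (hm : 0 ≤ m)
    (hr : ∀ r ∈ s, 1 ≤ r) (hX : ∀ r ∈ s, 0 < m * r + c)
    (h : ∀ r ∈ s, -Real.log (m * r + c) ≤ 1 ∨ r * m ≤ 2 * (m * r + c)) :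
    ConvexOn ℝ s fun r ↦ (m * r + c) ^ r := by
  refine convexOn_of_hasDerivWithinAt2_nonneg hs
    (fun r hrs ↦ (hasDerivAt_affine_rpow_self (hX r hrs)).continuousAt.continuousWithinAt)
    (fun r hrs ↦ (hasDerivAt_affine_rpow_self (hX r (interior_subset hrs))).hasDerivWithinAt)
    (fun r hrs ↦
      (hasDerivAt_deriv_affine_rpow_self (hX r (interior_subset hrs))).hasDerivWithinAt) ?_
  intro r hrs
  replace hrs := interior_subset hrs
  have hXr := hX r hrs
  refine mul_nonneg (Real.rpow_nonneg hXr.le r)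
    (sq_sub_add_mul_two_sub_nonneg (hr r hrs) (div_nonneg hm hXr.le) ((h r hrs).imp_right ?_))
  intro hle
  rwa [← mul_div_assoc, div_le_iff₀ hXr]

lemma concaveOn_one_sub_rpow_of_convexOn {s : Set ℝ} {φ : ℝ → ℝ} {a : ℝ} (hφ : ConvexOn ℝ s φ)
    (hφ1 : ∀ r ∈ s, φ r ≤ 1) (ha0 : 0 ≤ a) (ha1 : a ≤ 1) :
    ConcaveOn ℝ s fun r ↦ (1 - φ r) ^ a := by
  have hsub : ConcaveOn ℝ s fun r ↦ 1 - φ r := (concaveOn_const 1 hφ.1).sub hφ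
  refine ⟨hφ.1, fun x hx y hy α β hα hβ hαβ ↦ ?_⟩
  have hx0 : 0 ≤ 1 - φ x := sub_nonneg.2 (hφ1 x hx)
  have hy0 : 0 ≤ 1 - φ y := sub_nonneg.2 (hφ1 y hy)
  calc α • (1 - φ x) ^ a + β • (1 - φ y) ^ a ≤ (α • (1 - φ x) + β • (1 - φ y)) ^ a :=
        (Real.concaveOn_rpow ha0 ha1).2 hx0 hy0 hα hβ hαβ
    _ ≤ (1 - φ (α • x + β • y)) ^ a :=
        Real.rpow_le_rpow (by positivity) (hsub.2 hx hy hα hβ hαβ) ha0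

end Convexity

section Chord

variable {a q₀ q₁ x₀ x₁ α β : ℝ}

lemma convexOn_chord_rpow_self {m c : ℝ} (ha0 : 0 ≤ a) (ha1 : a ≤ 1) (hq₀ : 1 ≤ q₀)
    (hq : q₀ < q₁) (hx₀ : m * q₀ + c ∈ Ioo (0 : ℝ) 1) (hx₁ : m * q₁ + c ∈ Ioo (0 : ℝ) 1)
    (h : arcsinPQ a q₀ (m * q₀ + c) = arcsinPQ a q₁ (m * q₁ + c)) :
    ConvexOn ℝ (Icc q₀ q₁) fun r ↦ (m * r + c) ^ r := by
  have hq₀' : 0 < q₀ := one_pos.trans_le hq₀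
  have hm : 0 ≤ m := by
    have := le_of_arcsinPQ_eq ha0 hq₀' hq.le (Ioo_subset_Ico_self hx₀) (Ioo_subset_Ico_self hx₁) h
    exact (mul_le_mul_iff_left₀ (sub_pos.2 hq)).1 (by linarith)
  have hslope : q₁ * m ≤ arcsinPQ a q₀ (m * q₀ + c) := by
    have := mul_sub_le_of_arcsinPQ_eq ha0 ha1 hq₀' hq.le (Ioo_subset_Ico_self hx₀)
      (Ioo_subset_Ico_self hx₁) h
    exact le_of_mul_le_mul_left (by linarith) (sub_pos.2 hq)
  have hX_ge : ∀ r ∈ Icc q₀ q₁, m * q₀ + c ≤ m * r + c := fun r hr ↦ by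
    gcongr
    exact hr.1
  have hX_pos : ∀ r ∈ Icc q₀ q₁, 0 < m * r + c := fun r hr ↦ hx₀.1.trans_le (hX_ge r hr)
  refine convexOn_affine_rpow_self (convex_Icc q₀ q₁) hm (fun r hr ↦ hq₀.trans hr.1) hX_pos ?_
  intro r hr
  rw [neg_le, Real.le_log_iff_exp_le (hX_pos r hr)]
  refine (le_or_gt (Real.exp (-1)) (m * r + c)).imp_right fun hlt ↦ ?_
  have hhalf : m * q₀ + c ≤ 1 / 2 :=
    ((hX_ge r hr).trans_lt (hlt.trans Real.exp_neg_one_lt_half)).le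
  calc r * m ≤ q₁ * m := by
        gcongr
        exact hr.2
    _ ≤ arcsinPQ a q₀ (m * q₀ + c) := hslope
    _ ≤ (m * q₀ + c) / (1 - (m * q₀ + c)) :=
      arcsinPQ_le_div_one_sub ha1 hq₀ (Ioo_subset_Ico_self hx₀)
    _ ≤ 2 * (m * q₀ + c) := by
      rw [div_le_iff₀ (sub_pos.2 hx₀.2)]
      nlinarith [hx₀.1]
    _ ≤ 2 * (m * r + c) := by
      gcongr
      exact hr.1

lemma convexComb_one_sub_rpow_rpow_le (ha0 : 0 ≤ a) (ha1 : a ≤ 1) (hq₀ : 1 ≤ q₀) (hq : q₀ < q₁)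
    (hx₀ : x₀ ∈ Ioo (0 : ℝ) 1) (hx₁ : x₁ ∈ Ioo (0 : ℝ) 1)
    (h : arcsinPQ a q₀ x₀ = arcsinPQ a q₁ x₁) (hα : 0 ≤ α) (hβ : 0 ≤ β) (hαβ : α + β = 1) :
    α * (1 - x₀ ^ q₀) ^ a + β * (1 - x₁ ^ q₁) ^ a ≤
      (1 - (α * x₀ + β * x₁) ^ (α * q₀ + β * q₁)) ^ a := by
  have hd : q₁ - q₀ ≠ 0 := (sub_pos.2 hq).ne'
  obtain ⟨m, c, rfl, rfl⟩ : ∃ m c : ℝ, m * q₀ + c = x₀ ∧ m * q₁ + c = x₁ :=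
    ⟨(x₁ - x₀) / (q₁ - q₀), x₀ - (x₁ - x₀) / (q₁ - q₀) * q₀, by ring, by field_simp; ring⟩
  have hconv := convexOn_chord_rpow_self ha0 ha1 hq₀ hq hx₀ hx₁ h
  have hle_one : ∀ r ∈ Icc q₀ q₁, (m * r + c) ^ r ≤ 1 := fun r hr ↦
    (hconv.le_max_of_mem_Icc (left_mem_Icc.2 hq.le) (right_mem_Icc.2 hq.le) hr).trans <|
      max_le (Real.rpow_le_one hx₀.1.le hx₀.2.le (by linarith))
        (Real.rpow_le_one hx₁.1.le hx₁.2.le (by linarith))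
  have hconc := concaveOn_one_sub_rpow_of_convexOn hconv hle_one ha0 ha1
  have hcomb : α * (m * q₀ + c) + β * (m * q₁ + c) = m * (α * q₀ + β * q₁) + c := by
    linear_combination c * hαβ
  simpa only [hcomb, smul_eq_mul] using
    hconc.2 (left_mem_Icc.2 hq.le) (right_mem_Icc.2 hq.le) hα hβ hαβ

end Chord

section Sine

variable {a q x u v : ℝ}

lemma sinPQ_mem_Ico (hu : u ∈ arcsinPQ a q '' Ico 0 1) : sinPQ a q u ∈ Ico (0 : ℝ) 1 :=
  Function.invFunOn_mem hu

lemma arcsinPQ_sinPQ (hu : u ∈ arcsinPQ a q '' Ico 0 1) : arcsinPQ a q (sinPQ a q u) = u :=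
  Function.invFunOn_eq hu

lemma sinPQ_arcsinPQ (ha : 0 ≤ a) (hq : 0 < q) (hx : x ∈ Ico (0 : ℝ) 1) :
    sinPQ a q (arcsinPQ a q x) = x :=
  (strictMonoOn_arcsinPQ ha hq).injOn.leftInvOn_invFunOn hx

lemma sinPQ_zero (ha : 0 ≤ a) (hq : 0 < q) : sinPQ a q 0 = 0 := by
  simpa only [arcsinPQ_zero] using sinPQ_arcsinPQ ha hq (x := 0) ⟨le_rfl, one_pos⟩

lemma Icc_arcsinPQ_subset_image (hq : 0 < q) (hx : x ∈ Ico (0 : ℝ) 1) :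
    Icc 0 (arcsinPQ a q x) ⊆ arcsinPQ a q '' Ico 0 1 := by
  have hsub : Icc 0 x ⊆ Ico 0 1 := Icc_subset_Ico_right hx.2
  have hivt := intermediate_value_Icc hx.1 ((continuousOn_arcsinPQ (a := a) hq).mono hsub)
  rw [arcsinPQ_zero] at hivt
  exact hivt.trans (image_mono hsub)

lemma sinPQ_le_sinPQ_add_sub (ha : 0 ≤ a) (hq : 0 < q) (hu : u ∈ arcsinPQ a q '' Ico 0 1)
    (hv : v ∈ arcsinPQ a q '' Ico 0 1) :
    sinPQ a q u ≤ sinPQ a q v + |u - v| := by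
  rcases le_total (sinPQ a q u) (sinPQ a q v) with hle | hle
  · exact hle.trans (le_add_of_nonneg_right (abs_nonneg _))
  · have := sub_le_arcsinPQ_sub ha hq (sinPQ_mem_Ico hv).1 hle (sinPQ_mem_Ico hu).2
    rw [arcsinPQ_sinPQ hu, arcsinPQ_sinPQ hv] at this
    linarith [le_abs_self (u - v)]

lemma continuousOn_sinPQ (ha : 0 ≤ a) (hq : 0 < q) :
    ContinuousOn (sinPQ a q) (arcsinPQ a q '' Ico 0 1) :=
  (LipschitzOnWith.of_le_add fun _ hu _ hv ↦ sinPQ_le_sinPQ_add_sub ha hq hu hv).continuousOn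

lemma sinPQ_mem_Ioo (hq : 0 < q) (hx : x ∈ Ico (0 : ℝ) 1)
    (hu : u ∈ Ioo 0 (arcsinPQ a q x)) : sinPQ a q u ∈ Ioo (0 : ℝ) 1 := by
  have hu_mem := Icc_arcsinPQ_subset_image hq hx (Ioo_subset_Icc_self hu)
  have hs := sinPQ_mem_Ico hu_mem
  refine ⟨hs.1.lt_of_ne fun h0 ↦ hu.1.ne ?_, hs.2⟩
  rw [← arcsinPQ_sinPQ hu_mem, ← h0, arcsinPQ_zero]

lemma hasDerivAt_sinPQ (ha : 0 ≤ a) (hq : 0 < q) (hx : x ∈ Ico (0 : ℝ) 1)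
    (hu : u ∈ Ioo 0 (arcsinPQ a q x)) :
    HasDerivAt (sinPQ a q) ((1 - sinPQ a q u ^ q) ^ a) u := by
  have hnhds : arcsinPQ a q '' Ico 0 1 ∈ nhds u :=
    Filter.mem_of_superset (Icc_mem_nhds hu.1 hu.2) (Icc_arcsinPQ_subset_image hq hx)
  have hs := sinPQ_mem_Ioo hq hx hu
  have hpos := (one_sub_rpow_mem_Ioc hq (Ioo_subset_Ico_self hs)).1
  have hinv := HasDerivAt.of_local_left_inverse ((continuousOn_sinPQ ha hq).continuousAt hnhds)
    (hasDerivAt_arcsinPQ hq hs) (Real.rpow_pos_of_pos hpos (-a)).ne'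
    (Filter.eventually_of_mem hnhds fun v hv ↦ arcsinPQ_sinPQ hv)
  rwa [← Real.rpow_neg hpos.le, neg_neg] at hinv

end Sine

section Comparison

variable {a q₀ q₁ x₀ x₁ α β : ℝ}

lemma exists_hasDerivAt_arcsinPQ_convexComb_sinPQ_le_one {u : ℝ} (ha0 : 0 ≤ a) (ha1 : a ≤ 1)
    (hq₀ : 1 ≤ q₀) (hq : q₀ < q₁) (hx₀ : x₀ ∈ Ico (0 : ℝ) 1) (hx₁ : x₁ ∈ Ico (0 : ℝ) 1)
    (hu₀ : u ∈ Ioo 0 (arcsinPQ a q₀ x₀)) (hu₁ : u ∈ Ioo 0 (arcsinPQ a q₁ x₁))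
    (hα : 0 ≤ α) (hβ : 0 ≤ β) (hαβ : α + β = 1) :
    ∃ d ≤ 1, HasDerivAt
      (fun v ↦ arcsinPQ a (α * q₀ + β * q₁) (α * sinPQ a q₀ v + β * sinPQ a q₁ v)) d u := by
  have hq₀' : 0 < q₀ := one_pos.trans_le hq₀
  have hq₁' : 0 < q₁ := hq₀'.trans hq
  have hq' : 0 < α * q₀ + β * q₁ := convex_Ioi (0 : ℝ) hq₀' hq₁' hα hβ hαβ
  have hs₀ := sinPQ_mem_Ioo hq₀' hx₀ hu₀
  have hs₁ := sinPQ_mem_Ioo hq₁' hx₁ hu₁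
  have hs : α * sinPQ a q₀ u + β * sinPQ a q₁ u ∈ Ioo (0 : ℝ) 1 :=
    convex_Ioo 0 1 hs₀ hs₁ hα hβ hαβ
  have hlevel : arcsinPQ a q₀ (sinPQ a q₀ u) = arcsinPQ a q₁ (sinPQ a q₁ u) := by
    rw [arcsinPQ_sinPQ (Icc_arcsinPQ_subset_image hq₀' hx₀ (Ioo_subset_Icc_self hu₀)),
      arcsinPQ_sinPQ (Icc_arcsinPQ_subset_image hq₁' hx₁ (Ioo_subset_Icc_self hu₁))]
  have hcomb : HasDerivAt (fun v ↦ α * sinPQ a q₀ v + β * sinPQ a q₁ v)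
      (α * (1 - sinPQ a q₀ u ^ q₀) ^ a + β * (1 - sinPQ a q₁ u ^ q₁) ^ a) u :=
    ((hasDerivAt_sinPQ ha0 hq₀' hx₀ hu₀).const_mul α).add
      ((hasDerivAt_sinPQ ha0 hq₁' hx₁ hu₁).const_mul β)
  have hderiv := (hasDerivAt_arcsinPQ (a := a) hq' hs).comp u hcomb
  refine ⟨_, ?_, hderiv⟩
  have hpos := (one_sub_rpow_mem_Ioc hq' (Ioo_subset_Ico_self hs)).1
  rw [Real.rpow_neg hpos.le, inv_mul_le_one₀ (Real.rpow_pos_of_pos hpos a)]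
  exact convexComb_one_sub_rpow_rpow_le ha0 ha1 hq₀ hq hs₀ hs₁ hlevel hα hβ hαβ

lemma arcsinPQ_convexComb_le (ha0 : 0 ≤ a) (ha1 : a ≤ 1) (hq₀ : 1 ≤ q₀) (hq : q₀ < q₁)
    (hx₀ : x₀ ∈ Ico (0 : ℝ) 1) (hx₁ : x₁ ∈ Ico (0 : ℝ) 1)
    (h : arcsinPQ a q₀ x₀ = arcsinPQ a q₁ x₁) (hα : 0 ≤ α) (hβ : 0 ≤ β) (hαβ : α + β = 1) :
    arcsinPQ a (α * q₀ + β * q₁) (α * x₀ + β * x₁) ≤ arcsinPQ a q₀ x₀ := by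
  have hq₀' : 0 < q₀ := one_pos.trans_le hq₀
  have hq₁' : 0 < q₁ := hq₀'.trans hq
  have hq' : 0 < α * q₀ + β * q₁ := convex_Ioi (0 : ℝ) hq₀' hq₁' hα hβ hαβ
  have hy0 : 0 ≤ arcsinPQ a q₀ x₀ := by
    simpa only [arcsinPQ_zero] using
      (strictMonoOn_arcsinPQ ha0 hq₀').monotoneOn ⟨le_rfl, one_pos⟩ hx₀ hx₀.1
  have hsub₀ : Icc 0 (arcsinPQ a q₀ x₀) ⊆ arcsinPQ a q₀ '' Ico 0 1 :=
    Icc_arcsinPQ_subset_image hq₀' hx₀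
  have hsub₁ : Icc 0 (arcsinPQ a q₀ x₀) ⊆ arcsinPQ a q₁ '' Ico 0 1 :=
    h ▸ Icc_arcsinPQ_subset_image hq₁' hx₁
  have hcont : ContinuousOn
      (fun u ↦ arcsinPQ a (α * q₀ + β * q₁) (α * sinPQ a q₀ u + β * sinPQ a q₁ u))
      (Icc 0 (arcsinPQ a q₀ x₀)) :=
    (continuousOn_arcsinPQ hq').comp
      ((((continuousOn_sinPQ ha0 hq₀').mono hsub₀).const_mul α).add
        (((continuousOn_sinPQ ha0 hq₁').mono hsub₁).const_mul β))
      fun u hu ↦ convex_Ico 0 1 (sinPQ_mem_Ico (hsub₀ hu)) (sinPQ_mem_Ico (hsub₁ hu)) hα hβ hαβ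
  have hderiv : ∀ u ∈ interior (Icc 0 (arcsinPQ a q₀ x₀)), ∃ d ≤ 1, HasDerivAt
      (fun v ↦ arcsinPQ a (α * q₀ + β * q₁) (α * sinPQ a q₀ v + β * sinPQ a q₁ v)) d u := by
    intro u hu
    rw [interior_Icc] at hu
    exact exists_hasDerivAt_arcsinPQ_convexComb_sinPQ_le_one ha0 ha1 hq₀ hq hx₀ hx₁ hu (h ▸ hu)
      hα hβ hαβ
  have hmvt := Convex.image_sub_le_mul_sub_of_deriv_le (convex_Icc _ _) hcont
    (fun u hu ↦ (hderiv u hu).elim fun _ hd ↦ hd.2.differentiableAt.differentiableWithinAt)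
    (fun u hu ↦ (hderiv u hu).elim fun _ hd ↦ hd.2.deriv.trans_le hd.1)
    0 (left_mem_Icc.2 hy0) _ (right_mem_Icc.2 hy0) hy0
  have hs₀ : sinPQ a q₀ (arcsinPQ a q₀ x₀) = x₀ := sinPQ_arcsinPQ ha0 hq₀' hx₀
  have hs₁ : sinPQ a q₁ (arcsinPQ a q₀ x₀) = x₁ := by rw [h, sinPQ_arcsinPQ ha0 hq₁' hx₁]
  simpa only [hs₀, hs₁, sinPQ_zero ha0 hq₀', sinPQ_zero ha0 hq₁', arcsinPQ_zero, mul_zero,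
    add_zero, sub_zero, one_mul] using hmvt

end Comparison

theorem sin_pq_concave_in_q_general {a y : ℝ} (ha0 : 0 ≤ a) (ha1 : a ≤ 1) {s : Set ℝ}
    (hs : Convex ℝ s) (hs1 : ∀ q ∈ s, 1 ≤ q) {g : ℝ → ℝ}
    (hg : ∀ q ∈ s, g q ∈ Ico (0 : ℝ) 1 ∧ arcsinPQ a q (g q) = y) : ConcaveOn ℝ s g := by
  refine LinearOrder.concaveOn_of_lt hs fun q₀ hq₀ q₁ hq₁ hq α β hα hβ hαβ ↦ ?_
  obtain ⟨hx₀, hy₀⟩ := hg q₀ hq₀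
  obtain ⟨hx₁, hy₁⟩ := hg q₁ hq₁
  have hqm : α * q₀ + β * q₁ ∈ s := hs hq₀ hq₁ hα.le hβ.le hαβ
  obtain ⟨hx, hy⟩ := hg _ hqm
  have hcomb : α * g q₀ + β * g q₁ ∈ Ico (0 : ℝ) 1 :=
    convex_Ico 0 1 hx₀ hx₁ hα.le hβ.le hαβ
  refine ((strictMonoOn_arcsinPQ ha0 (one_pos.trans_le (hs1 _ hqm))).le_iff_le hcomb hx).1 ?_
  calc arcsinPQ a (α * q₀ + β * q₁) (α * g q₀ + β * g q₁) ≤ arcsinPQ a q₀ (g q₀) :=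
        arcsinPQ_convexComb_le ha0 ha1 (hs1 q₀ hq₀) hq hx₀ hx₁ (hy₀.trans hy₁.symm) hα.le hβ.le hαβ
    _ = arcsinPQ a (α * q₀ + β * q₁) (g (α * q₀ + β * q₁)) := hy₀.trans hy.symm

theorem sin_pq_concave_in_q (p y : ℝ) (hp : 1 < p) (hy : 0 < y) (g : ℝ → ℝ)
    (hg : ∀ q : ℝ, 1 < q → g q ∈ Set.Ioo (0:ℝ) 1 ∧
      (∫ t in (0:ℝ)..g q, (1 - t ^ q) ^ (-(1 / p))) = y) :
    ConcaveOn ℝ (Set.Ioi (1:ℝ)) g :=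
  sin_pq_concave_in_q_general (one_div_nonneg.2 (one_pos.trans hp).le)
    ((div_le_one (one_pos.trans hp)).2 hp.le) (convex_Ioi 1) (fun _ hq ↦ hq.le)
    fun q hq ↦ ⟨Ioo_subset_Ico_self (hg q hq).1, (hg q hq).2⟩
end

section
/- Let p, q > 1, α < 1, β < 1 and 0 ≤ s ≤ 1. Then ∫_0^1 [(p/q) ∫_{s·x}^1 (1-u^p)^{1/q-1} u^{p-2} du] · x^{-α} (1-x^p)^{-β} dx = (1/(pq)) B((p-1)/p, 1/q) B((1-α)/p, 1-β) − (s^{p-1}/(q(p-1))) B(1-α/p, 1-β) · ∑_{k=0}^∞ [(1-1/q)_k (1-α/p)_k ((p-1)/p)_k / ((2-α/p-β)_k ((2p-1)/p)_k · k!)] s^{pk}. (That is, ∫_0^1 arccos_{p,q}(sx) x^{-α}(1-x^p)^{-β} dx = (1/(pq)) B((p-1)/p,1/q) B((1-α)/p,1-β) − (s^{p-1}/(q(p-1))) B(1-α/p,1-β) ₃F₂(1-1/q, 1-α/p, (p-1)/p; 2-α/p-β, (2p-1)/p; s^p).) -/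
open MeasureTheory

/-- Ascending Pochhammer symbol `(a)_k = a (a+1) ⋯ (a+k-1)`. -/
noncomputable def poch (a : ℝ) (k : ℕ) : ℝ := ∏ i ∈ Finset.range k, (a + i)

/-- Euler's beta function `B(a,b) = Γ(a)Γ(b)/Γ(a+b)`. -/
noncomputable def betaR (a b : ℝ) : ℝ := Real.Gamma a * Real.Gamma b / Real.Gamma (a + b)

/-!
Since `∫_{sx}^1 = ∫_0^1 - ∫_0^{sx}`, it suffices to integrate the incomplete integral
`∫_0^{sx} u^(p-2) (1-u^p)^(1/q-1) du` against the weight. For `q > 1` the binomial series of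
`(1-u^p)^(1/q-1)` has nonnegative coefficients, so both integrations may be carried out term by
term, even though the integrands are singular at the endpoints. Each term becomes a complete beta
integral, and the functional equation of `Γ` turns the resulting beta values into Pochhammer
symbols.
-/

open Set

section Pochhammer

lemma poch_succ (a : ℝ) (k : ℕ) : poch a (k + 1) = poch a k * (a + k) :=
  Finset.prod_range_succ _ _

lemma poch_succ' (a : ℝ) (k : ℕ) : poch a (k + 1) = a * poch (a + 1) k := by
  simp [poch, Finset.prod_range_succ', mul_comm a, ← add_assoc, add_right_comm a 1]

lemma poch_nonneg {a : ℝ} (ha : 0 ≤ a) (k : ℕ) : 0 ≤ poch a k :=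
  Finset.prod_nonneg fun _ _ => by positivity

lemma poch_ne_zero {a : ℝ} (ha : ∀ m : ℕ, a ≠ -m) (k : ℕ) : poch a k ≠ 0 :=
  Finset.prod_ne_zero_iff.2 fun i _ h => ha i (eq_neg_of_add_eq_zero_left h)

lemma poch_eq_eval_ascPochhammer (a : ℝ) (k : ℕ) : poch a k = (ascPochhammer ℝ k).eval a := by
  induction k with
  | zero => simp [poch]
  | succ k ih => rw [poch_succ, ascPochhammer_succ_eval, ih]

lemma choose_add_sub_one_eq_poch_div_factorial (a : ℝ) (k : ℕ) :
    Ring.choose (a + k - 1) k = poch a k / k.factorial := by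
  rw [← Ring.multichoose_eq, eq_div_iff (by positivity), mul_comm, ← nsmul_eq_mul,
    Ring.factorial_nsmul_multichoose_eq_ascPochhammer, Polynomial.ascPochhammer_smeval_eq_eval,
    poch_eq_eval_ascPochhammer]

lemma hasSum_poch_div_factorial_mul_pow (a : ℝ) {z : ℝ} (hz : |z| < 1) :
    HasSum (fun k : ℕ => poch a k / k.factorial * z ^ k) ((1 - z) ^ (-a)) := by
  have h := (Real.one_div_one_sub_rpow_hasFPowerSeriesOnBall_zero a).hasSum (y := z)
    (by simpa [enorm_eq_nnnorm, ← NNReal.coe_lt_coe] using hz)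
  simpa only [FormalMultilinearSeries.ofScalars_apply_eq, choose_add_sub_one_eq_poch_div_factorial,
    smul_eq_mul, zero_add, one_div, ← Real.rpow_neg (sub_nonneg.2 (abs_lt.1 hz).2.le)] using h

end Pochhammer

section Beta

lemma ne_neg_natCast_of_pos {a : ℝ} (ha : 0 < a) (m : ℕ) : a ≠ -m :=
  ((neg_nonpos.2 m.cast_nonneg).trans_lt ha).ne'

lemma Gamma_add_natCast {a : ℝ} (ha : ∀ m : ℕ, a ≠ -m) (k : ℕ) :
    Real.Gamma (a + k) = poch a k * Real.Gamma a := by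
  induction k with
  | zero => simp [poch]
  | succ k ih =>
    have hak : a + k ≠ 0 := fun h => ha k (eq_neg_of_add_eq_zero_left h)
    rw [poch_succ, Nat.cast_succ, ← add_assoc, Real.Gamma_add_one hak, ih]
    ring

lemma betaR_add_natCast {a b : ℝ} (ha : ∀ m : ℕ, a ≠ -m) (hab : ∀ m : ℕ, a + b ≠ -m) (k : ℕ) :
    betaR (a + k) b = betaR a b * (poch a k / poch (a + b) k) := by
  rw [betaR, betaR, add_right_comm, Gamma_add_natCast ha, Gamma_add_natCast hab]
  ring

/-- The integrand `u^a (1 - u^p)^b` on `(0, 1)` of the beta integral in the variable `u^p`. Both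
the integrand of the generalized arccosine and the weight `x^(-α) (1 - x^p)^(-β)` have this form. -/
noncomputable def betaKernel (p a b u : ℝ) : ℝ := u ^ a * (1 - u ^ p) ^ b

lemma ofReal_betaKernel_one (a b : ℝ) {t : ℝ} (ht : t ∈ Icc (0 : ℝ) 1) :
    (betaKernel 1 (a - 1) (b - 1) t : ℂ) = (t : ℂ) ^ ((a : ℂ) - 1) * (1 - t) ^ ((b : ℂ) - 1) := by
  rw [betaKernel, Real.rpow_one]
  push_cast [Complex.ofReal_cpow ht.1, Complex.ofReal_cpow (sub_nonneg.2 ht.2)]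
  rfl

lemma intervalIntegrable_betaKernel_one {a b : ℝ} (ha : 0 < a) (hb : 0 < b) :
    IntervalIntegrable (betaKernel 1 (a - 1) (b - 1)) volume 0 1 := by
  have h := Complex.betaIntegral_convergent (u := a) (v := b) (by simpa) (by simpa)
  rw [intervalIntegrable_iff_integrableOn_Icc_of_le zero_le_one] at h ⊢
  refine (integrableOn_congr_fun (fun t ht => ?_) measurableSet_Icc).1 h.re
  simp [← ofReal_betaKernel_one a b ht]

lemma integral_betaKernel_one {a b : ℝ} (ha : 0 < a) (hb : 0 < b) :
    ∫ t in (0 : ℝ)..1, betaKernel 1 (a - 1) (b - 1) t = betaR a b := by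
  apply Complex.ofReal_injective
  calc ((∫ t in (0 : ℝ)..1, betaKernel 1 (a - 1) (b - 1) t : ℝ) : ℂ)
      = ∫ t in (0 : ℝ)..1, (betaKernel 1 (a - 1) (b - 1) t : ℂ) :=
        intervalIntegral.integral_ofReal.symm
    _ = Complex.betaIntegral a b := intervalIntegral.integral_congr fun t ht =>
        ofReal_betaKernel_one a b (by rwa [uIcc_of_le zero_le_one] at ht)
    _ = (betaR a b : ℂ) := by
        rw [Complex.betaIntegral_eq_Gamma_mul_div _ _ (by simpa) (by simpa), betaR]
        push_cast [Complex.Gamma_ofReal, ← Complex.ofReal_add]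
        rfl

lemma betaKernel_eq_deriv_rpow_mul {p u : ℝ} (hp : p ≠ 0) (hu : 0 < u) (a b : ℝ) :
    betaKernel p a b u =
      p⁻¹ * (p * u ^ (p - 1) * betaKernel 1 ((a + 1) / p - 1) (b + 1 - 1) (u ^ p)) := by
  have hexp : u ^ (p - 1) * (u ^ p) ^ ((a + 1) / p - 1) = u ^ a := by
    rw [← Real.rpow_mul hu.le, ← Real.rpow_add hu]
    congr 1
    field_simp
    ring
  rw [betaKernel, betaKernel, Real.rpow_one, add_sub_cancel_right, ← hexp]
  field_simp

variable {p a b : ℝ}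

lemma hasDerivAt_rpow_of_pos (p : ℝ) {u : ℝ} (hu : 0 < u) :
    HasDerivAt (fun u : ℝ => u ^ p) (p * u ^ (p - 1)) u :=
  Real.hasDerivAt_rpow_const (Or.inl hu.ne')

lemma intervalIntegrable_betaKernel (hp : 0 < p) (ha : -1 < a) (hb : -1 < b) :
    IntervalIntegrable (betaKernel p a b) volume 0 1 := by
  have hone := intervalIntegrable_betaKernel_one (a := (a + 1) / p) (b := b + 1)
    (div_pos (by linarith) hp) (by linarith)
  have hsubst := (integrableOn_Icc_deriv_smul_iff_of_deriv_nonneg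
    (f := fun u : ℝ => u ^ p) (f' := fun u => p * u ^ (p - 1)) (a := 0) (b := 1)
    (g := betaKernel 1 ((a + 1) / p - 1) (b + 1 - 1))
    (Real.continuous_rpow_const hp.le).continuousOn
    (fun u hu => hasDerivAt_rpow_of_pos p hu.1)
    (fun u hu => by have := hu.1; positivity) zero_le_one).2
    (by simpa [hp.ne', ← intervalIntegrable_iff_integrableOn_Icc_of_le] using hone)
  rw [← intervalIntegrable_iff_integrableOn_Icc_of_le zero_le_one] at hsubst
  refine (hsubst.const_mul p⁻¹).congr_uIoo fun u hu => ?_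
  rw [uIoo_of_le zero_le_one] at hu
  exact (betaKernel_eq_deriv_rpow_mul hp.ne' hu.1 a b).symm

lemma integral_betaKernel (hp : 0 < p) (ha : -1 < a) (hb : -1 < b) :
    ∫ u in (0 : ℝ)..1, betaKernel p a b u = 1 / p * betaR ((a + 1) / p) (b + 1) := by
  have hsubst := intervalIntegral.integral_deriv_smul_comp_of_deriv_nonneg
    (f := fun u : ℝ => u ^ p) (f' := fun u => p * u ^ (p - 1)) (a := 0) (b := 1)
    (g := betaKernel 1 ((a + 1) / p - 1) (b + 1 - 1))
    (Real.continuous_rpow_const hp.le).continuousOn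
    (fun u hu => hasDerivAt_rpow_of_pos p (by simpa using hu.1))
    (fun u hu => by have : 0 < u := (by simpa using hu.1); positivity)
  rw [Real.zero_rpow hp.ne', Real.one_rpow,
    integral_betaKernel_one (div_pos (by linarith) hp) (by linarith)] at hsubst
  rw [one_div, ← hsubst, ← intervalIntegral.integral_const_mul]
  exact intervalIntegral.integral_congr_Ioo_of_le zero_le_one fun u hu =>
    betaKernel_eq_deriv_rpow_mul hp.ne' hu.1 a b

lemma rpow_mul_betaKernel {u : ℝ} (hu : 0 < u) (p a b r : ℝ) :
    u ^ r * betaKernel p a b u = betaKernel p (r + a) b u := by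
  rw [betaKernel, betaKernel, ← mul_assoc, ← Real.rpow_add hu]

lemma betaKernel_nonneg {u : ℝ} (hp : 0 ≤ p) (hu : u ∈ Icc (0 : ℝ) 1) (a b : ℝ) :
    0 ≤ betaKernel p a b u :=
  mul_nonneg (Real.rpow_nonneg hu.1 a)
    (Real.rpow_nonneg (sub_nonneg.2 (Real.rpow_le_one hu.1 hu.2 hp)) b)

lemma measurable_betaKernel (p a b : ℝ) : Measurable (betaKernel p a b) := by
  unfold betaKernel
  fun_prop

lemma intervalIntegrable_betaKernel_zero_left (hp : 0 < p) (ha : -1 < a) (hb : -1 < b) {y : ℝ}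
    (hy : y ∈ Icc (0 : ℝ) 1) : IntervalIntegrable (betaKernel p a b) volume 0 y :=
  (intervalIntegrable_betaKernel hp ha hb).mono_set
    (uIcc_subset_uIcc_left (by rwa [uIcc_of_le zero_le_one]))

lemma continuousOn_integral_betaKernel (hp : 0 < p) (ha : -1 < a) (hb : -1 < b) :
    ContinuousOn (fun y => ∫ u in (0 : ℝ)..y, betaKernel p a b u) (Icc 0 1) := by
  rw [← uIcc_of_le zero_le_one]
  exact intervalIntegral.continuousOn_primitive_interval'
    (intervalIntegrable_betaKernel hp ha hb) left_mem_uIcc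

lemma integral_mul_rpow_mul_betaKernel {s r : ℝ} (hs : 0 ≤ s) (hp : 0 < p) (hra : -1 < r + a)
    (hb : -1 < b) :
    ∫ x in (0 : ℝ)..1, (s * x) ^ r * betaKernel p a b x =
      s ^ r * (1 / p * betaR ((r + a + 1) / p) (b + 1)) := by
  rw [← integral_betaKernel hp hra hb, ← intervalIntegral.integral_const_mul]
  refine intervalIntegral.integral_congr_Ioo_of_le zero_le_one fun x hx => ?_
  rw [Real.mul_rpow hs hx.1.le, mul_assoc, rpow_mul_betaKernel hx.1]

end Beta

section TermwiseIntegration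

lemma hasSum_integral_of_nonneg {ι X : Type*} [Countable ι] [MeasurableSpace X] {μ : Measure X}
    {F : ι → X → ℝ} {f : X → ℝ} (hF_meas : ∀ i, AEStronglyMeasurable (F i) μ)
    (hF_nonneg : ∀ i, 0 ≤ᵐ[μ] F i) (hf : Integrable f μ)
    (hsum : ∀ᵐ x ∂μ, HasSum (fun i => F i x) (f x)) :
    HasSum (fun i => ∫ x, F i x ∂μ) (∫ x, f x ∂μ) := by
  refine hasSum_integral_of_dominated_convergence F hF_meas
    (fun i => (hF_nonneg i).mono fun x hx => (Real.norm_of_nonneg hx).le)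
    (hsum.mono fun x hx => hx.summable) (hf.congr ?_) hsum
  exact hsum.mono fun x hx => hx.tsum_eq.symm

lemma hasSum_intervalIntegral_of_nonneg {ι : Type*} [Countable ι] {a b : ℝ} (hab : a ≤ b)
    {F : ι → ℝ → ℝ} {f : ℝ → ℝ} (hF_meas : ∀ i, Measurable (F i))
    (hF_nonneg : ∀ i, ∀ x ∈ Ioo a b, 0 ≤ F i x) (hf : IntervalIntegrable f volume a b)
    (hsum : ∀ x ∈ Ioo a b, HasSum (fun i => F i x) (f x)) :
    HasSum (fun i => ∫ x in a..b, F i x) (∫ x in a..b, f x) := by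
  simp only [intervalIntegral.integral_of_le hab, integral_Ioc_eq_integral_Ioo]
  exact hasSum_integral_of_nonneg (fun i => (hF_meas i).aestronglyMeasurable)
    (fun i => ae_restrict_of_forall_mem measurableSet_Ioo (hF_nonneg i))
    ((intervalIntegrable_iff_integrableOn_Ioo_of_le hab).1 hf)
    (ae_restrict_of_forall_mem measurableSet_Ioo hsum)

variable {p a c : ℝ}

lemma hasSum_betaKernel (hp : 0 < p) {u : ℝ} (hu : u ∈ Ioo (0 : ℝ) 1) (a c : ℝ) :
    HasSum (fun k : ℕ => poch c k / k.factorial * u ^ (p * k + a)) (betaKernel p a (-c) u) := by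
  have hup : |u ^ p| < 1 := by
    rw [abs_of_nonneg (Real.rpow_nonneg hu.1.le p)]
    exact Real.rpow_lt_one hu.1.le hu.2 hp
  rw [betaKernel]
  convert! (hasSum_poch_div_factorial_mul_pow c hup).mul_left (u ^ a) using 2 with k
  rw [Real.rpow_add hu.1, Real.rpow_mul_natCast hu.1.le]
  ring

lemma hasSum_integral_betaKernel_zero_left (hp : 0 < p) (ha : -1 < a) (hc₀ : 0 ≤ c) (hc₁ : c < 1)
    {y : ℝ} (hy : y ∈ Icc (0 : ℝ) 1) :
    HasSum (fun k : ℕ => poch c k / k.factorial / (p * k + a + 1) * y ^ (p * k + a + 1))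
      (∫ u in (0 : ℝ)..y, betaKernel p a (-c) u) := by
  convert hasSum_intervalIntegral_of_nonneg hy.1
    (F := fun k u => poch c k / k.factorial * u ^ (p * (k : ℝ) + a)) (fun k => by fun_prop)
    (fun k u hu => mul_nonneg (div_nonneg (poch_nonneg hc₀ k) k.factorial.cast_nonneg)
      (Real.rpow_nonneg hu.1.le _))
    (intervalIntegrable_betaKernel_zero_left hp ha (by linarith) hy)
    (fun u hu => hasSum_betaKernel hp ⟨hu.1, hu.2.trans_le hy.2⟩ a c) using 2 with k
  have hk : 0 ≤ p * k := by positivity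
  rw [intervalIntegral.integral_const_mul, integral_rpow (Or.inl (by linarith)),
    Real.zero_rpow (by linarith)]
  ring

end TermwiseIntegration

section Hypergeometric

/-- The `k`-th coefficient of the hypergeometric series `₃F₂(a₁, a₂, a₃; b₁, b₂; z)`. -/
noncomputable def hypergeometric₃₂Coeff (a₁ a₂ a₃ b₁ b₂ : ℝ) (k : ℕ) : ℝ :=
  poch a₁ k * poch a₂ k * poch a₃ k / (poch b₁ k * poch b₂ k * (k.factorial : ℝ))

lemma poch_div_factorial_mul_betaR_div_eq {b g e : ℝ} (hb : ∀ m : ℕ, b ≠ -m)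
    (hbe : ∀ m : ℕ, b + e ≠ -m) (hg : ∀ m : ℕ, g ≠ -m) (c : ℝ) (k : ℕ) :
    poch c k / k.factorial * betaR (b + k) e / (g + k) =
      betaR b e / g * hypergeometric₃₂Coeff c b g (b + e) (g + 1) k := by
  have htelescope : poch g k * (g + k) = g * poch (g + 1) k := by rw [← poch_succ, poch_succ']
  have hinv : (g + k)⁻¹ = poch g k / (g * poch (g + 1) k) := by
    rw [← htelescope, div_mul_cancel_left₀ (poch_ne_zero hg k)]
  rw [betaR_add_natCast hb hbe, hypergeometric₃₂Coeff, div_eq_mul_inv, hinv]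
  ring

end Hypergeometric

section IteratedIntegral

variable {p a c d e s : ℝ}

lemma mul_mem_Icc_zero_one {x : ℝ} (hs : s ∈ Icc (0 : ℝ) 1) (hx : x ∈ Icc (0 : ℝ) 1) :
    s * x ∈ Icc (0 : ℝ) 1 :=
  ⟨mul_nonneg hs.1 hx.1, mul_le_one₀ hs.2 hx.1 hx.2⟩

lemma intervalIntegrable_integral_betaKernel_mul_betaKernel {b : ℝ} (hp : 0 < p) (ha : -1 < a)
    (hb : -1 < b) (hd : -1 < d) (he : -1 < e) (hs : s ∈ Icc (0 : ℝ) 1) :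
    IntervalIntegrable
      (fun x => (∫ u in (0 : ℝ)..s * x, betaKernel p a b u) * betaKernel p d e x) volume 0 1 := by
  refine (intervalIntegrable_betaKernel hp hd he).continuousOn_mul ?_
  rw [uIcc_of_le zero_le_one]
  exact (continuousOn_integral_betaKernel hp ha hb).comp (by fun_prop)
    fun x hx => mul_mem_Icc_zero_one hs hx

lemma integral_poch_mul_rpow_mul_betaKernel (hp : 0 < p) (ha : -1 < a) (hd : -1 < d) (he : -1 < e)
    (hs : 0 ≤ s) (c : ℝ) (k : ℕ) :
    ∫ x in (0 : ℝ)..1, poch c k / k.factorial / (p * k + a + 1) * (s * x) ^ (p * k + a + 1) *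
        betaKernel p d e x =
      s ^ (a + 1) / (p * (a + 1)) * betaR ((a + d + 2) / p) (e + 1) *
        (hypergeometric₃₂Coeff c ((a + d + 2) / p) ((a + 1) / p) ((a + d + 2) / p + (e + 1))
          ((a + 1) / p + 1) k * s ^ (p * (k : ℝ))) := by
  have hk : 0 ≤ p * k := by positivity
  have hb : 0 < (a + d + 2) / p := div_pos (by linarith) hp
  have hg : 0 < (a + 1) / p := div_pos (by linarith) hp
  have hcoeff := poch_div_factorial_mul_betaR_div_eq (ne_neg_natCast_of_pos hb)
    (ne_neg_natCast_of_pos (add_pos hb (by linarith : 0 < e + 1))) (ne_neg_natCast_of_pos hg) c k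
  have hbeta_arg : (p * k + a + 1 + d + 1) / p = (a + d + 2) / p + k := by
    field_simp
    ring
  have hdenom : p * k + a + 1 = p * ((a + 1) / p + k) := by
    field_simp
    ring
  have hpow : s ^ (p * k + a + 1) = s ^ (a + 1) * s ^ (p * (k : ℝ)) := by
    rw [add_assoc, add_comm, Real.rpow_add_of_nonneg hs (by linarith) hk]
  simp only [mul_assoc]
  rw [intervalIntegral.integral_const_mul,
    integral_mul_rpow_mul_betaKernel hs hp (by linarith) he, hbeta_arg, hpow, hdenom]
  calc poch c k / k.factorial / (p * ((a + 1) / p + k)) * (s ^ (a + 1) * s ^ (p * (k : ℝ)) *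
          (1 / p * betaR ((a + d + 2) / p + k) (e + 1)))
      = s ^ (a + 1) * s ^ (p * (k : ℝ)) / p ^ 2 * (poch c k / k.factorial *
          betaR ((a + d + 2) / p + k) (e + 1) / ((a + 1) / p + k)) := by
        rw [← div_div]
        ring
    _ = _ := by
      rw [hcoeff]
      field_simp

theorem hasSum_integral_zero_left_mul_betaKernel (hp : 0 < p) (ha : -1 < a) (hc₀ : 0 ≤ c)
    (hc₁ : c < 1) (hd : -1 < d) (he : -1 < e) (hs : s ∈ Icc (0 : ℝ) 1) :
    HasSum (fun k : ℕ => s ^ (a + 1) / (p * (a + 1)) * betaR ((a + d + 2) / p) (e + 1) *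
        (hypergeometric₃₂Coeff c ((a + d + 2) / p) ((a + 1) / p) ((a + d + 2) / p + (e + 1))
          ((a + 1) / p + 1) k * s ^ (p * (k : ℝ))))
      (∫ x in (0 : ℝ)..1, (∫ u in (0 : ℝ)..s * x, betaKernel p a (-c) u) *
        betaKernel p d e x) := by
  simp only [← integral_poch_mul_rpow_mul_betaKernel hp ha hd he hs.1 c]
  have hsx {x : ℝ} (hx : x ∈ Ioo (0 : ℝ) 1) := mul_mem_Icc_zero_one hs (Ioo_subset_Icc_self hx)
  refine hasSum_intervalIntegral_of_nonneg zero_le_one (fun k => ?_) (fun k x hx => ?_)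
    (intervalIntegrable_integral_betaKernel_mul_betaKernel hp ha (by linarith) hd he hs)
    fun x hx => (hasSum_integral_betaKernel_zero_left hp ha hc₀ hc₁ (hsx hx)).mul_right _
  · have := measurable_betaKernel p d e
    fun_prop
  · have hdenom : 0 ≤ p * k + a + 1 := by
      have : 0 ≤ p * k := by positivity
      linarith
    have := poch_nonneg hc₀ k
    have := (hsx hx).1
    have := betaKernel_nonneg hp.le (Ioo_subset_Icc_self hx) d e
    positivity

theorem integral_integral_one_right_mul_betaKernel (hp : 0 < p) (ha : -1 < a) (hc₀ : 0 ≤ c)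
    (hc₁ : c < 1) (hd : -1 < d) (he : -1 < e) (hs : s ∈ Icc (0 : ℝ) 1) :
    ∫ x in (0 : ℝ)..1, (∫ u in s * x..1, betaKernel p a (-c) u) * betaKernel p d e x =
      1 / p ^ 2 * betaR ((a + 1) / p) (1 - c) * betaR ((d + 1) / p) (e + 1) -
      s ^ (a + 1) / (p * (a + 1)) * betaR ((a + d + 2) / p) (e + 1) *
        ∑' k : ℕ, hypergeometric₃₂Coeff c ((a + d + 2) / p) ((a + 1) / p)
          ((a + d + 2) / p + (e + 1)) ((a + 1) / p + 1) k * s ^ (p * (k : ℝ)) := by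
  have hc : -1 < -c := by linarith
  have hkernel := intervalIntegrable_betaKernel hp ha hc
  calc ∫ x in (0 : ℝ)..1, (∫ u in s * x..1, betaKernel p a (-c) u) * betaKernel p d e x
      = ∫ x in (0 : ℝ)..1, ((∫ u in (0 : ℝ)..1, betaKernel p a (-c) u) * betaKernel p d e x -
          (∫ u in (0 : ℝ)..s * x, betaKernel p a (-c) u) * betaKernel p d e x) :=
        intervalIntegral.integral_congr_Ioo_of_le zero_le_one fun x hx => by
          have hsx := mul_mem_Icc_zero_one hs (Ioo_subset_Icc_self hx)
          rw [← sub_mul, intervalIntegral.integral_interval_sub_left hkernel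
            (intervalIntegrable_betaKernel_zero_left hp ha hc hsx)]
    _ = (∫ u in (0 : ℝ)..1, betaKernel p a (-c) u) * (∫ x in (0 : ℝ)..1, betaKernel p d e x) -
          ∫ x in (0 : ℝ)..1, (∫ u in (0 : ℝ)..s * x, betaKernel p a (-c) u) *
            betaKernel p d e x := by
        rw [intervalIntegral.integral_sub
          ((intervalIntegrable_betaKernel hp hd he).const_mul _)
          (intervalIntegrable_integral_betaKernel_mul_betaKernel hp ha hc hd he hs),
          intervalIntegral.integral_const_mul]
    _ = _ := by
        rw [integral_betaKernel hp ha hc, integral_betaKernel hp hd he,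
          ← (hasSum_integral_zero_left_mul_betaKernel hp ha hc₀ hc₁ hd he hs).tsum_eq,
          tsum_mul_left, neg_add_eq_sub]
        ring

end IteratedIntegral

theorem arccos_pq_integral (p q α β s : ℝ) (hp : 1 < p) (hq : 1 < q)
    (hα : α < 1) (hβ : β < 1) (hs : s ∈ Set.Icc (0:ℝ) 1) :
    (∫ x in (0:ℝ)..1,
        ((p / q) * ∫ u in (s * x)..1, (1 - u ^ p) ^ (1 / q - 1) * u ^ (p - 2)) *
          x ^ (-α) * (1 - x ^ p) ^ (-β)) =
      (1 / (p * q)) * betaR ((p - 1) / p) (1 / q) * betaR ((1 - α) / p) (1 - β) -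
      (s ^ (p - 1) / (q * (p - 1))) * betaR (1 - α / p) (1 - β) *
        ∑' k : ℕ, poch (1 - 1 / q) k * poch (1 - α / p) k * poch ((p - 1) / p) k /
          (poch (2 - α / p - β) k * poch ((2 * p - 1) / p) k * (Nat.factorial k : ℝ)) *
            s ^ (p * (k : ℝ)) := by
  have hp₀ : 0 < p := by linarith
  have hq_inv : 1 / q < 1 := (div_lt_one (by linarith)).2 hq
  have hq_inv₀ : 0 < 1 / q := by positivity
  have hiterated := integral_integral_one_right_mul_betaKernel (a := p - 2) (c := 1 - 1 / q)
    (d := -α) (e := -β) hp₀ (by linarith) (by linarith) (by linarith) (by linarith)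
    (by linarith) hs
  have ha₁ : p - 2 + 1 = p - 1 := by ring
  have hb : (p - 2 + -α + 2) / p = 1 - α / p := by field_simp; ring
  have hbe : 1 - α / p + (1 - β) = 2 - α / p - β := by ring
  have hg₁ : (p - 1) / p + 1 = (2 * p - 1) / p := by field_simp; ring
  rw [neg_add_eq_sub, neg_add_eq_sub, neg_sub, sub_sub_cancel, hb, ha₁, hbe, hg₁] at hiterated
  simp only [betaKernel, hypergeometric₃₂Coeff] at hiterated
  simp only [mul_comm (_ ^ (1 / q - 1)), mul_assoc, intervalIntegral.integral_const_mul]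
    at hiterated ⊢
  rw [hiterated]
  field_simp
end

section
/- Fix q > 1 and y > 0, and let g : ℝ → ℝ satisfy g(p) ∈ (0,∞) and ∫_0^{g(p)} (1+t^q)^{-1/p} dt = y for every p > 1. Then p ↦ log g(p) is convex on (1,∞) if and only if for every p > 1, writing x = g(p), one has (((q−p)x^q − p)/(p x (1+x^q)^{1−1/p})) · (∫_0^x λ₁(p,t) dt)² + 2 log(1+x^q) · ∫_0^x λ₁(p,t) dt + ∫_0^x λ₂(p,t) dt ≥ 0, where λ₁(p,t) = log(1+t^q)/(1+t^q)^{1/p} and λ₂(p,t) = (2p − log(1+t^q)) log(1+t^q)/(1+t^q)^{1/p}. -/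
open MeasureTheory

/-!
With `L t = log (1 + t ^ q)` the defining equation of `g` reads `∫₀^{g p} exp (-L / p) = y`, so it
is governed by the moments `M k r x = ∫₀^x L ^ k * exp (r * L)`, whose partial derivatives in `r`
and `x` are `M (k + 1)` and the integrand. For any reparametrization `r = r s` of the exponent,
implicit differentiation of `M 0 (r s) (x s) = y` gives `x' = -r' * M 1 * exp (-r * L x)`, and
differentiating `x' / x` once more expresses `(log x)''` through `M 1` and `M 2`. For `r p = -1 / p`
this is a positive multiple of the expression in the criterion.
-/

section

open Real Filter Topology Set

theorem convexOn_iff_forall_deriv2_nonneg {S : Set ℝ} {f f' f'' : ℝ → ℝ} (hSo : IsOpen S)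
    (hSc : Convex ℝ S) (hf : ∀ x ∈ S, HasDerivAt f (f' x) x)
    (hf' : ∀ x ∈ S, HasDerivAt f' (f'' x) x) :
    ConvexOn ℝ S f ↔ ∀ x ∈ S, 0 ≤ f'' x := by
  have hderiv : ∀ x ∈ S, HasDerivAt (deriv f) (f'' x) x := fun x hx =>
    (hf' x hx).congr_of_eventuallyEq <|
      (hSo.eventually_mem hx).mono fun z hz => (hf z hz).deriv
  constructor
  · intro hconv x hx
    have hmono := hconv.monotoneOn_deriv fun z hz => (hf z hz).differentiableAt
    rw [← (hderiv x hx).deriv, ← derivWithin_of_isOpen hSo hx]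
    exact hmono.derivWithin_nonneg
  · intro hnonneg
    refine convexOn_of_deriv2_nonneg' hSc
      (fun x hx => (hf x hx).differentiableAt.differentiableWithinAt)
      (fun x hx => (hderiv x hx).differentiableAt.differentiableWithinAt) fun x hx => ?_
    simpa only [Function.iterate_succ, Function.iterate_zero, Function.comp_apply, id,
      (hderiv x hx).deriv] using hnonneg x hx

/-- Injectivity in the second variable replaces the usual continuity assumption on `x`. -/
theorem hasDerivAt_of_eventually_apply_eq_const {f : ℝ → ℝ → ℝ} {r x : ℝ → ℝ} {a b r' s c : ℝ}
    (hf : HasStrictFDerivAt (fun z : ℝ × ℝ => f z.1 z.2)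
      ((ContinuousLinearMap.toSpanSingleton ℝ a).coprod
        (ContinuousLinearMap.toSpanSingleton ℝ b)) (r s, x s))
    (hb : b ≠ 0) (hinj : ∀ u, Function.Injective (f u)) (hr : HasDerivAt r r' s)
    (hc : ∀ᶠ v in 𝓝 s, f (r v) (x v) = c) :
    HasDerivAt x (-(r' * a / b)) s := by
  have hinv : (((ContinuousLinearMap.toSpanSingleton ℝ a).coprod
      (ContinuousLinearMap.toSpanSingleton ℝ b)) ∘L .inr ℝ ℝ ℝ).IsInvertible := by
    rw [ContinuousLinearMap.coprod_comp_inr]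
    exact ⟨ContinuousLinearEquiv.unitsEquivAut ℝ (Units.mk0 b hb), by ext; simp⟩
  let ψ := hf.implicitFunctionOfProdDomain hinv
  have hψ : DifferentiableAt ℝ ψ (r s) :=
    (hf.hasStrictFDerivAt_implicitFunctionOfProdDomain hinv).differentiableAt
  have hxψ : x =ᶠ[𝓝 s] ψ ∘ r := by
    filter_upwards [hc, hr.continuousAt.eventually
      (hf.eventually_apply_implicitFunctionOfProdDomain hinv)] with v hv hψv
    exact hinj (r v) (hv.trans (hψv.trans hc.self_of_nhds).symm)
  have hx : HasDerivAt x (deriv x s) s :=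
    ((hψ.comp s hr.differentiableAt).congr_of_eventuallyEq hxψ).hasDerivAt
  have hchain : HasDerivAt (fun v => f (r v) (x v)) (r' * a + deriv x s * b) s := by
    simpa using! hf.hasFDerivAt.comp_hasDerivAt s (hr.prodMk hx)
  have hzero : r' * a + deriv x s * b = 0 :=
    hchain.unique ((hasDerivAt_const s c).congr_of_eventuallyEq hc)
  refine hx.congr_deriv ?_
  field_simp
  linarith

/-- The moment of order `k` on `[0, x]` of the weight `L` against the exponential density
`exp (r * L)`; it is the `k`-th derivative of `∫₀^x exp (r * L)` in `r`. -/
noncomputable def expMoment (L : ℝ → ℝ) (k : ℕ) (r x : ℝ) : ℝ :=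
  ∫ t in (0 : ℝ)..x, L t ^ k * exp (r * L t)

section ExpMoment

variable {L : ℝ → ℝ}

theorem continuous_expMoment (hL : Continuous L) (k : ℕ) :
    Continuous fun z : ℝ × ℝ => expMoment L k z.1 z.2 :=
  intervalIntegral.continuous_parametric_intervalIntegral_of_continuous
    (f := fun (z : ℝ × ℝ) t => L t ^ k * exp (z.1 * L t))
    (by simp only [Function.uncurry_def]; fun_prop) continuous_snd

theorem hasDerivAt_expMoment_endpoint (hL : Continuous L) (k : ℕ) (r x : ℝ) :
    HasDerivAt (expMoment L k r) (L x ^ k * exp (r * L x)) x :=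
  have hcont : Continuous fun t => L t ^ k * exp (r * L t) := by fun_prop
  (hcont.integral_hasStrictDerivAt 0 x).hasDerivAt

theorem hasDerivAt_expMoment_exponent (hL : Continuous L) (k : ℕ) (r x : ℝ) :
    HasDerivAt (fun r => expMoment L k r x) (expMoment L (k + 1) r x) r := by
  have hset (a b : ℝ) : HasDerivAt (fun r => ∫ t in Ioc a b, L t ^ k * exp (r * L t))
      (∫ t in Ioc a b, L t ^ (k + 1) * exp (r * L t)) r := by
    refine ProbabilityTheory.hasDerivAt_integral_pow_mul_exp_real ?_ k
    have huniv : ProbabilityTheory.integrableExpSet L (volume.restrict (Ioc a b)) = univ :=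
      eq_univ_of_forall fun s =>
        (show Continuous fun t => exp (s * L t) by fun_prop).integrableOn_Ioc
    rw [huniv, interior_univ]
    exact mem_univ r
  exact (hset 0 x).sub (hset x 0)

theorem hasStrictFDerivAt_expMoment (hL : Continuous L) (k : ℕ) (z : ℝ × ℝ) :
    HasStrictFDerivAt (fun z : ℝ × ℝ => expMoment L k z.1 z.2)
      ((ContinuousLinearMap.toSpanSingleton ℝ (expMoment L (k + 1) z.1 z.2)).coprod
        (ContinuousLinearMap.toSpanSingleton ℝ (L z.2 ^ k * exp (z.1 * L z.2)))) z := by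
  have hspan : Continuous (ContinuousLinearMap.toSpanSingleton ℝ : ℝ → ℝ →L[ℝ] ℝ) :=
    (ContinuousLinearMap.toSpanSingletonCLE (𝕜 := ℝ) (E := ℝ)).continuous
  have hintegrand : Continuous fun z : ℝ × ℝ => L z.2 ^ k * exp (z.1 * L z.2) := by fun_prop
  exact hasStrictFDerivAt_uncurry_coprod (𝕜 := ℝ) (f := expMoment L k)
    (f₁ := fun r x => .toSpanSingleton ℝ (expMoment L (k + 1) r x))
    (f₂ := fun r x => .toSpanSingleton ℝ (L x ^ k * exp (r * L x)))
    (.of_forall fun v => (hasDerivAt_expMoment_exponent hL k v.1 v.2).hasFDerivAt)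
    (.of_forall fun v => (hasDerivAt_expMoment_endpoint hL k v.1 v.2).hasFDerivAt)
    (hspan.comp (continuous_expMoment hL (k + 1))).continuousAt
    (hspan.comp hintegrand).continuousAt

theorem hasDerivAt_expMoment_comp (hL : Continuous L) (k : ℕ) {r x : ℝ → ℝ} {r' x' s : ℝ}
    (hr : HasDerivAt r r' s) (hx : HasDerivAt x x' s) :
    HasDerivAt (fun s => expMoment L k (r s) (x s))
      (r' * expMoment L (k + 1) (r s) (x s) + x' * (L (x s) ^ k * exp (r s * L (x s)))) s := by
  simpa using! (hasStrictFDerivAt_expMoment hL k (r s, x s)).hasFDerivAt.comp_hasDerivAt s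
    (hr.prodMk hx)

theorem strictMono_expMoment_zero (hL : Continuous L) (r : ℝ) : StrictMono (expMoment L 0 r) :=
  strictMono_of_deriv_pos fun x => by
    rw [(hasDerivAt_expMoment_endpoint hL 0 r x).deriv]
    positivity

theorem hasDerivAt_of_expMoment_zero_eq_const (hL : Continuous L) {r x : ℝ → ℝ} {r' s y : ℝ}
    (hr : HasDerivAt r r' s) (hy : ∀ᶠ v in 𝓝 s, expMoment L 0 (r v) (x v) = y) :
    HasDerivAt x (-(r' * expMoment L 1 (r s) (x s) * exp (-r s * L (x s)))) s := by
  refine (hasDerivAt_of_eventually_apply_eq_const (hasStrictFDerivAt_expMoment hL 0 (r s, x s))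
    (by positivity) (fun u => (strictMono_expMoment_zero hL u).injective) hr hy).congr_deriv ?_
  rw [pow_zero, one_mul, zero_add, neg_mul, exp_neg, div_eq_mul_inv]

theorem hasDerivAt_logDeriv_of_expMoment_zero_eq_const (hL : Continuous L)
    {r r' x : ℝ → ℝ} {r'' L' s y : ℝ} (hr : HasDerivAt r (r' s) s) (hr' : HasDerivAt r' r'' s)
    (hL' : HasDerivAt L L' (x s)) (hx : x s ≠ 0)
    (hy : ∀ᶠ v in 𝓝 s, expMoment L 0 (r v) (x v) = y) :
    HasDerivAt
      (fun s => -(r' s * expMoment L 1 (r s) (x s) * exp (-r s * L (x s))) / x s)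
      (exp (-r s * L (x s)) / x s *
        (r' s ^ 2 * ((-r s * L' - 1 / x s) * exp (-r s * L (x s)) * expMoment L 1 (r s) (x s) ^ 2 +
          2 * L (x s) * expMoment L 1 (r s) (x s) - expMoment L 2 (r s) (x s)) -
        r'' * expMoment L 1 (r s) (x s))) s := by
  have hx' := hasDerivAt_of_expMoment_zero_eq_const hL hr hy
  have hexp := (hr.fun_neg.mul (hL'.comp s hx')).exp
  have hmoment := hasDerivAt_expMoment_comp hL 1 hr hx'
  refine (((hr'.mul hmoment).mul hexp).fun_neg.div hx' hx).congr_deriv ?_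
  have hcancel : exp (r s * L (x s)) = (exp (-r s * L (x s)))⁻¹ := by
    rw [neg_mul, exp_neg, inv_inv]
  simp only [Pi.mul_apply, Function.comp_apply, pow_one, hcancel, Nat.reduceAdd]
  field_simp
  ring

theorem convexOn_log_iff_of_expMoment_zero_eq_const (hL : Continuous L) {S : Set ℝ}
    (hSo : IsOpen S) (hSc : Convex ℝ S) {r r' r'' x L' : ℝ → ℝ} {y : ℝ}
    (hr : ∀ s ∈ S, HasDerivAt r (r' s) s) (hr' : ∀ s ∈ S, HasDerivAt r' (r'' s) s)
    (hL' : ∀ s ∈ S, HasDerivAt L (L' (x s)) (x s)) (hx : ∀ s ∈ S, 0 < x s)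
    (hy : ∀ s ∈ S, expMoment L 0 (r s) (x s) = y) :
    ConvexOn ℝ S (fun s => log (x s)) ↔ ∀ s ∈ S,
      0 ≤ r' s ^ 2 *
          ((-r s * L' (x s) - 1 / x s) * exp (-r s * L (x s)) * expMoment L 1 (r s) (x s) ^ 2 +
            2 * L (x s) * expMoment L 1 (r s) (x s) - expMoment L 2 (r s) (x s)) -
        r'' s * expMoment L 1 (r s) (x s) := by
  have hy_near : ∀ s ∈ S, ∀ᶠ v in 𝓝 s, expMoment L 0 (r v) (x v) = y := fun s hs =>
    (hSo.eventually_mem hs).mono hy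
  rw [convexOn_iff_forall_deriv2_nonneg hSo hSc
    (fun s hs => (hasDerivAt_of_expMoment_zero_eq_const hL (hr s hs) (hy_near s hs)).log
      (hx s hs).ne')
    (fun s hs => hasDerivAt_logDeriv_of_expMoment_zero_eq_const hL (hr s hs) (hr' s hs)
      (hL' s hs) (hx s hs).ne' (hy_near s hs))]
  exact forall₂_congr fun s hs => mul_nonneg_iff_of_pos_left (div_pos (exp_pos _) (hx s hs))

end ExpMoment

/-- The weight `log (1 + t ^ q)`, extended evenly to `t < 0` so as to be continuous on `ℝ`. -/
noncomputable def logOneAddAbsRpow (q t : ℝ) : ℝ := log (1 + |t| ^ q)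

theorem logOneAddAbsRpow_of_nonneg (q : ℝ) {t : ℝ} (ht : 0 ≤ t) :
    logOneAddAbsRpow q t = log (1 + t ^ q) := by
  rw [logOneAddAbsRpow, abs_of_nonneg ht]

theorem continuous_logOneAddAbsRpow {q : ℝ} (hq : 0 ≤ q) : Continuous (logOneAddAbsRpow q) :=
  (continuous_const.add (continuous_abs.rpow_const fun _ => Or.inr hq)).log fun t => by
    have habs := rpow_nonneg (abs_nonneg t) q
    exact (add_pos_of_pos_of_nonneg one_pos habs).ne'

theorem hasDerivAt_logOneAddAbsRpow (q : ℝ) {x : ℝ} (hx : 0 < x) :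
    HasDerivAt (logOneAddAbsRpow q) (q * x ^ (q - 1) / (1 + x ^ q)) x := by
  have hlog : HasDerivAt (fun t : ℝ => log (1 + t ^ q)) (q * x ^ (q - 1) / (1 + x ^ q)) x :=
    ((hasDerivAt_rpow_const (Or.inl hx.ne')).const_add 1).log (by positivity)
  exact hlog.congr_of_eventuallyEq <|
    (eventually_gt_nhds hx).mono fun t ht => logOneAddAbsRpow_of_nonneg q ht.le

theorem exp_mul_logOneAddAbsRpow (q a : ℝ) {t : ℝ} (ht : 0 ≤ t) :
    exp (a * logOneAddAbsRpow q t) = (1 + t ^ q) ^ a := by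
  have hpos : 0 < 1 + t ^ q := by positivity
  rw [logOneAddAbsRpow_of_nonneg q ht, rpow_def_of_pos hpos, mul_comm]

theorem integral_comp_log_one_add_rpow_mul_rpow (F : ℝ → ℝ) (q a : ℝ) {x : ℝ} (hx : 0 ≤ x) :
    ∫ t in (0 : ℝ)..x, F (log (1 + t ^ q)) * (1 + t ^ q) ^ a =
      ∫ t in (0 : ℝ)..x, F (logOneAddAbsRpow q t) * exp (a * logOneAddAbsRpow q t) := by
  refine intervalIntegral.integral_congr fun t ht => ?_
  rw [uIcc_of_le hx] at ht
  rw [exp_mul_logOneAddAbsRpow q a ht.1, logOneAddAbsRpow_of_nonneg q ht.1]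

theorem integral_comp_log_one_add_rpow_div_rpow (F : ℝ → ℝ) (q a : ℝ) {x : ℝ} (hx : 0 ≤ x) :
    ∫ t in (0 : ℝ)..x, F (log (1 + t ^ q)) / (1 + t ^ q) ^ a =
      ∫ t in (0 : ℝ)..x, F (logOneAddAbsRpow q t) * exp (-a * logOneAddAbsRpow q t) := by
  rw [← integral_comp_log_one_add_rpow_mul_rpow F q (-a) hx]
  refine intervalIntegral.integral_congr fun t ht => ?_
  rw [uIcc_of_le hx] at ht
  have hnonneg : 0 ≤ 1 + t ^ q := add_nonneg zero_le_one (rpow_nonneg ht.1 q)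
  simp only [rpow_neg hnonneg, div_eq_mul_inv]

theorem integral_one_add_rpow_rpow (q a : ℝ) {x : ℝ} (hx : 0 ≤ x) :
    ∫ t in (0 : ℝ)..x, (1 + t ^ q) ^ a = expMoment (logOneAddAbsRpow q) 0 a x := by
  simpa [expMoment] using integral_comp_log_one_add_rpow_mul_rpow (fun _ => 1) q a hx

theorem integral_log_one_add_rpow_div_rpow (q a : ℝ) {x : ℝ} (hx : 0 ≤ x) :
    ∫ t in (0 : ℝ)..x, log (1 + t ^ q) / (1 + t ^ q) ^ a =
      expMoment (logOneAddAbsRpow q) 1 (-a) x := by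
  simpa only [expMoment, pow_one] using
    integral_comp_log_one_add_rpow_div_rpow (fun u => u) q a hx

theorem integral_sub_log_one_add_rpow_mul_log_div_rpow {q : ℝ} (hq : 0 ≤ q) (a c : ℝ) {x : ℝ}
    (hx : 0 ≤ x) :
    ∫ t in (0 : ℝ)..x, (c - log (1 + t ^ q)) * log (1 + t ^ q) / (1 + t ^ q) ^ a =
      c * expMoment (logOneAddAbsRpow q) 1 (-a) x - expMoment (logOneAddAbsRpow q) 2 (-a) x := by
  have hL := continuous_logOneAddAbsRpow hq
  have hint (k : ℕ) : IntervalIntegrable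
      (fun t => logOneAddAbsRpow q t ^ k * exp (-a * logOneAddAbsRpow q t)) volume 0 x :=
    Continuous.intervalIntegrable (by fun_prop) 0 x
  rw [integral_comp_log_one_add_rpow_div_rpow (fun u => (c - u) * u) q a hx, expMoment, expMoment,
    ← intervalIntegral.integral_const_mul,
    ← intervalIntegral.integral_sub ((hint 1).const_mul c) (hint 2)]
  congr 1 with t
  ring

theorem hasDerivAt_neg_one_div {p : ℝ} (hp : p ≠ 0) :
    HasDerivAt (fun p : ℝ => -(1 / p)) (1 / p ^ 2) p := by
  simpa only [one_div, neg_neg] using (hasDerivAt_inv hp).fun_neg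

theorem hasDerivAt_one_div_sq {p : ℝ} (hp : p ≠ 0) :
    HasDerivAt (fun p : ℝ => 1 / p ^ 2) (-2 / p ^ 3) p := by
  have hinv := (hasDerivAt_pow 2 p).fun_inv (pow_ne_zero 2 hp)
  simp only [← one_div] at hinv
  refine hinv.congr_deriv ?_
  field_simp
  norm_num [mul_comm]

theorem logOneAddAbsRpow_deriv_sub_one_div_mul_rpow {p q x : ℝ} (hp : p ≠ 0) (hx : 0 < x) :
    (1 / p * (q * x ^ (q - 1) / (1 + x ^ q)) - 1 / x) * (1 + x ^ q) ^ (1 / p) =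
      ((q - p) * x ^ q - p) / (p * x * (1 + x ^ q) ^ (1 - 1 / p)) := by
  have hpos : 0 < 1 + x ^ q := by positivity
  rw [rpow_sub hpos, rpow_one, rpow_sub_one hx.ne']
  field_simp
  ring

theorem sinh_pq_log_convexity_criterion_general {q y : ℝ} (hq : 0 ≤ q) {S : Set ℝ}
    (hSo : IsOpen S) (hSc : Convex ℝ S) (hS0 : ∀ p ∈ S, p ≠ 0) {g : ℝ → ℝ}
    (hg : ∀ p ∈ S, 0 < g p ∧ (∫ t in (0 : ℝ)..g p, (1 + t ^ q) ^ (-(1 / p))) = y) :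
    ConvexOn ℝ S (fun p => log (g p)) ↔
      ∀ p ∈ S,
        ((q - p) * g p ^ q - p) / (p * g p * (1 + g p ^ q) ^ (1 - 1 / p)) *
            (∫ t in (0 : ℝ)..g p, log (1 + t ^ q) / (1 + t ^ q) ^ (1 / p)) ^ 2 +
          2 * log (1 + g p ^ q) *
            (∫ t in (0 : ℝ)..g p, log (1 + t ^ q) / (1 + t ^ q) ^ (1 / p)) +
          (∫ t in (0 : ℝ)..g p,
            (2 * p - log (1 + t ^ q)) * log (1 + t ^ q) / (1 + t ^ q) ^ (1 / p)) ≥ 0 := by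
  have hpos : ∀ p ∈ S, 0 < g p := fun p hp => (hg p hp).1
  have hy : ∀ p ∈ S, expMoment (logOneAddAbsRpow q) 0 (-(1 / p)) (g p) = y := fun p hp =>
    (integral_one_add_rpow_rpow q _ (hpos p hp).le).symm.trans (hg p hp).2
  rw [convexOn_log_iff_of_expMoment_zero_eq_const (continuous_logOneAddAbsRpow hq) hSo hSc
    (L' := fun x => q * x ^ (q - 1) / (1 + x ^ q))
    (fun p hp => hasDerivAt_neg_one_div (hS0 p hp)) (fun p hp => hasDerivAt_one_div_sq (hS0 p hp))
    (fun p hp => hasDerivAt_logOneAddAbsRpow q (hpos p hp)) hpos hy]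
  refine forall₂_congr fun p hp => ?_
  have hp0 := hS0 p hp
  have hx := hpos p hp
  rw [integral_log_one_add_rpow_div_rpow q _ hx.le,
    integral_sub_log_one_add_rpow_mul_log_div_rpow hq _ _ hx.le, neg_neg,
    exp_mul_logOneAddAbsRpow q _ hx.le, logOneAddAbsRpow_deriv_sub_one_div_mul_rpow hp0 hx,
    logOneAddAbsRpow_of_nonneg q hx.le, ge_iff_le,
    -- for `r p = -1 / p` the abstract criterion is `1 / p ^ 4` times the stated one
    ← mul_nonneg_iff_of_pos_left (show 0 < p ^ 4 by positivity)]
  refine iff_of_eq (congrArg (0 ≤ ·) ?_)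
  field_simp
  ring

end

theorem sinh_pq_log_convexity_criterion (q y : ℝ) (hq : 1 < q) (hy : 0 < y) (g : ℝ → ℝ)
    (hg : ∀ p : ℝ, 1 < p → g p ∈ Set.Ioi (0:ℝ) ∧
      (∫ t in (0:ℝ)..g p, (1 + t ^ q) ^ (-(1 / p))) = y) :
    ConvexOn ℝ (Set.Ioi (1:ℝ)) (fun p => Real.log (g p)) ↔
      ∀ p : ℝ, 1 < p →
        ((q - p) * g p ^ q - p) / (p * g p * (1 + g p ^ q) ^ (1 - 1 / p)) *
            (∫ t in (0:ℝ)..g p, Real.log (1 + t ^ q) / (1 + t ^ q) ^ (1 / p)) ^ 2 +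
          2 * Real.log (1 + g p ^ q) *
            (∫ t in (0:ℝ)..g p, Real.log (1 + t ^ q) / (1 + t ^ q) ^ (1 / p)) +
          (∫ t in (0:ℝ)..g p,
            (2 * p - Real.log (1 + t ^ q)) * Real.log (1 + t ^ q) / (1 + t ^ q) ^ (1 / p))
          ≥ 0 := by
  exact sinh_pq_log_convexity_criterion_general (by linarith) isOpen_Ioi (convex_Ioi 1)
    (fun p hp => (zero_lt_one.trans hp).ne') hg
end
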